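/- arXiv:1003.2016 — 2 statements merged into one kernel-verified Lean document; each statement's English description precedes it below -/
import Mathlib

section
/- Let N ≥ 1, let p_1,...,p_N be reals with 0 ≤ p_1 ≤ ... ≤ p_N, let L ≥ 0 and let k, l be real constants with k ≥ 2 and l ≥ 0. Define q_j = min(p_j, L), r_j = k·p_j + l·q_j, s_j(n,i) = p_j·n − q_j·i + c_j for arbitrary reals c_j, and the Type I function f^n_i = max over all (μ_1,...,μ_N) ∈ {0,1}^N of [Σ_{j=1}^N μ_j·s_j(n,i) − Σ_{1≤j<j'≤N} μ_j·μ_{j'}·r_j]. Then for all real n, i: f^n_i + f^{n+k}_{i−l+1} = max( f^{n+k−1}_{i−l} + f^{n+1}_{i+1}, f^{n+k}_{i−l} + f^n_{i+1} − L ). -/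
open Finset

/-- Type I generalized ultradiscrete soliton expression:
`max` over all `(μ_1,...,μ_N) ∈ {0,1}^N` of
`Σ_j μ_j s_j − Σ_{j<j'} μ_j μ_{j'} r_j`. -/
noncomputable def typeIMax (N : ℕ) (s r : Fin N → ℝ) : ℝ :=
  Finset.univ.sup' Finset.univ_nonempty fun μ : Fin N → Bool =>
    (∑ j, (if μ j then (1 : ℝ) else 0) * s j) -
      ∑ j, ∑ j', if j < j' then
        (if μ j then (1 : ℝ) else 0) * (if μ j' then (1 : ℝ) else 0) * r j else 0

/-!
Let `E` be the group of lattice positions `(n, i)`. A soliton has a linear phase `σ : E →+ ℝ`, and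
adding the soliton of largest amplitude to `g : E → ℝ` gives `τ x = max (g x) (σ x + c + g (x - K))`
for the fixed vector `K = (k, -l)`. In terms of `a = (1, 1)`, `b = (k - 1, -l)`, `d = (0, -1)`, so
that `K = a + b + d`, the bilinear equation becomes
`τ x + τ (x + a + b) = max (τ (x + a) + τ (x + b)) (τ (x - d) + τ (x + a + b + d) - L)`.
Expand each sum `τ y + τ z` into the terms where the new soliton is present in neither factor, in
both, or in exactly one. The first two kinds satisfy the equation because `g` does. For the third,
upper bounds `Δ_v Δ_K g ≤ σ v` on second differences show which term dominates in each sum, and the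
equation holds because either `σ d = L`, or the new soliton and `g` are both invariant under
translation by `a`. The bounds on second differences propagate to `τ` and weaken as the amplitude
grows, so induction on the number of solitons applies.
-/

section MixedDiff

variable {E : Type*} [AddCommGroup E] {g : E → ℝ} {v v' w : E} {C C' : ℝ}

/-- The second mixed difference `Δ_v Δ_w g`, where `Δ_v g x = g (x + v) - g x`, is everywhere at
most `C`. It is written without subtraction so that it can be fed to linear arithmetic. -/
def MixedDiffLE (g : E → ℝ) (v w : E) (C : ℝ) : Prop :=
  ∀ x, g x + g (x + v + w) ≤ g (x + v) + g (x + w) + C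

lemma MixedDiffLE.mono (h : MixedDiffLE g v w C) (hC : C ≤ C') : MixedDiffLE g v w C' :=
  fun x => (h x).trans (by gcongr)

lemma MixedDiffLE.add_left (h : MixedDiffLE g v w C) (h' : MixedDiffLE g v' w C') :
    MixedDiffLE g (v + v') w (C + C') := fun x => by
  have hv := h x
  have hv' := h' (x + v)
  rw [← add_assoc x v v']
  linarith

end MixedDiff

section AddSoliton

variable {E : Type*} [AddCommGroup E] {g : E → ℝ} {σ : E →+ ℝ} {c : ℝ} {K v w w' : E}

/-- The τ-function obtained from `g` by adding a soliton with linear phase `σ` and phase constant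
`c`, whose presence shifts the argument of `g` by `-K`. -/
noncomputable def addSoliton (σ : E →+ ℝ) (c : ℝ) (K : E) (g : E → ℝ) (x : E) : ℝ :=
  max (g x) (σ x + c + g (x - K))

/-- The part of `addSoliton σ c K g y + addSoliton σ c K g z` in which the new soliton is present in
exactly one of the two summands. -/
noncomputable def crossTerm (σ : E →+ ℝ) (c : ℝ) (K : E) (g : E → ℝ) (y z : E) : ℝ :=
  max (σ y + c + g (y - K) + g z) (g y + (σ z + c + g (z - K)))

lemma addSoliton_add_addSoliton (y z : E) :
    addSoliton σ c K g y + addSoliton σ c K g z =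
      max (max (g y + g z) (σ (y + z) + 2 * c + (g (y - K) + g (z - K))))
        (crossTerm σ c K g y z) := by
  have both : σ (y + z) + 2 * c + (g (y - K) + g (z - K)) =
      σ y + c + g (y - K) + (σ z + c + g (z - K)) := by
    rw [map_add]; ring
  simp only [addSoliton, crossTerm, both, max_add, add_max]
  ac_rfl

lemma crossTerm_add_right (h : MixedDiffLE g v K (σ v)) (y : E) :
    crossTerm σ c K g y (y + v) = g y + (σ (y + v) + c + g (y + v - K)) := by
  have hy := h (y - K)
  simp only [sub_add_cancel, sub_add_eq_add_sub] at hy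
  refine max_eq_right ?_
  rw [map_add]
  linarith

lemma mixedDiffLE_addSoliton (hK : w + w' = K) (h : MixedDiffLE g v w (σ v))
    (h_K : MixedDiffLE g v K (σ v)) (h_w' : ∀ x, g (x + v) + g (x + w') ≤ g x + g (x + v + w')) :
    MixedDiffLE (addSoliton σ c K g) v w (σ v) := fun x => by
  have hx := h x
  have hxK := h (x - K)
  have hxK_K := h_K (x - K)
  have hx_w' := h_w' (x + w - K)
  have bottom : x + w - K + w' = x := by rw [← hK]; abel
  have side : x + w - K + v + w' = x + v := by rw [← hK]; abel
  rw [bottom, side] at hx_w'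
  simp only [sub_add_eq_add_sub, add_sub_cancel_right, add_right_comm x w v] at hxK hxK_K hx_w'
  have absent_v := le_max_left (g (x + v)) (σ (x + v) + c + g (x + v - K))
  have present_v := le_max_right (g (x + v)) (σ (x + v) + c + g (x + v - K))
  have absent_w := le_max_left (g (x + w)) (σ (x + w) + c + g (x + w - K))
  have present_w := le_max_right (g (x + w)) (σ (x + w) + c + g (x + w - K))
  rw [addSoliton_add_addSoliton]
  simp only [addSoliton, crossTerm, map_add] at absent_v present_v absent_w present_w ⊢
  refine max_le (max_le ?neither ?both) (max_le ?left ?right) <;> linarith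

lemma periodic_addSoliton (h : Function.Periodic g v) (hσ : σ v = 0) :
    Function.Periodic (addSoliton σ c K g) v := fun x => by
  rw [addSoliton, addSoliton, map_add, hσ, add_zero, h, ← sub_add_eq_add_sub, h]

end AddSoliton

section Bilinear

variable {E : Type*} [AddCommGroup E] {a b d : E} {L : ℝ}

/-- The bilinear equation for a function `B` of two points, read as `B y z = τ y + τ z` for a
single τ-function. Allowing general `B` makes it possible to treat the parts of such a sum
separately. -/
def BilinearEq (a b d : E) (L : ℝ) (B : E → E → ℝ) : Prop :=
  ∀ x, B x (x + a + b) = max (B (x + a) (x + b)) (B (x - d) (x + a + b + d) - L)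

lemma BilinearEq.sup {B B' : E → E → ℝ} (h : BilinearEq a b d L B) (h' : BilinearEq a b d L B') :
    BilinearEq a b d L fun y z => max (B y z) (B' y z) := fun x => by
  simp only [h x, h' x, ← max_sub_sub_right]
  ac_rfl

lemma BilinearEq.add_phase {B : E → E → ℝ} (h : BilinearEq a b d L B) (σ : E →+ ℝ) (C : ℝ)
    (K : E) : BilinearEq a b d L fun y z => σ (y + z) + C + B (y - K) (z - K) := fun x => by
  have hx := h (x - K)
  have sum_side : x + a + (x + b) = x + (x + a + b) := by abel
  have sum_diag : x - d + (x + a + b + d) = x + (x + a + b) := by abel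
  simp only [sub_add_eq_add_sub, sub_right_comm x K d] at hx
  simp only [sum_side, sum_diag, hx, add_sub_assoc _ _ L, max_add_add_left]

/-- The invariant of the induction on the number of solitons: a τ-function of the bilinear equation
whose second differences are controlled by the linear phase `σ`. -/
structure IsSolitonTau (a b d : E) (L : ℝ) (σ : E →+ ℝ) (τ : E → ℝ) : Prop where
  mixedDiff : ∀ v ∈ ({a, b, d} : Set E), MixedDiffLE τ v (a + b + d) (σ v)
  mixedDiff_a : MixedDiffLE τ a (a + d) (σ a)
  mixedDiff_b : MixedDiffLE τ b (b + d) (σ b)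
  periodic : σ d < L → Function.Periodic τ a
  bilinear : BilinearEq a b d L fun y z => τ y + τ z

namespace IsSolitonTau

variable {σ ρ : E →+ ℝ} {g : E → ℝ} {c : ℝ}

lemma mono (h : IsSolitonTau a b d L σ g) (hσρ : ∀ v ∈ ({a, b, d} : Set E), σ v ≤ ρ v) :
    IsSolitonTau a b d L ρ g where
  mixedDiff v hv := (h.mixedDiff v hv).mono (hσρ v hv)
  mixedDiff_a := h.mixedDiff_a.mono (hσρ a (by simp))
  mixedDiff_b := h.mixedDiff_b.mono (hσρ b (by simp))
  periodic hd := h.periodic ((hσρ d (by simp)).trans_lt hd)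
  bilinear := h.bilinear

lemma zero (hL : 0 ≤ L) (hσ : ∀ v ∈ ({a, b, d} : Set E), 0 ≤ σ v) :
    IsSolitonTau a b d L σ fun _ => 0 where
  mixedDiff v hv x := by simpa using hσ v hv
  mixedDiff_a x := by simpa using hσ a (by simp)
  mixedDiff_b x := by simpa using hσ b (by simp)
  periodic _ _ := rfl
  bilinear x := by simpa using hL

lemma side_le_diagonal (h : IsSolitonTau a b d L σ g) (x : E) :
    g (x + a) + g (x + b) ≤ g x + g (x + a + b) :=
  (le_max_left _ _).trans_eq (h.bilinear x).symm

lemma crossTerm_diagonal (h : IsSolitonTau a b d L σ g) (x : E) :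
    crossTerm σ c (a + b + d) g x (x + a + b) = g x + g (x - d) + (σ (x + a + b) + c) := by
  have hab : MixedDiffLE g (a + b) (a + b + d) (σ (a + b)) :=
    map_add σ a b ▸ (h.mixedDiff a (by simp)).add_left (h.mixedDiff b (by simp))
  have shift : x + (a + b) - (a + b + d) = x - d := by abel
  rw [add_assoc x a b, crossTerm_add_right hab, shift]
  ring

lemma crossTerm_outer (h : IsSolitonTau a b d L σ g) (x : E) :
    crossTerm σ c (a + b + d) g (x - d) (x + a + b + d) =
      g x + g (x - d) + (σ (x + a + b) + c) + σ d := by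
  have hd : MixedDiffLE g d (a + b + d) (σ d) := h.mixedDiff d (by simp)
  have habdd : MixedDiffLE g (a + b + d + d) (a + b + d) (σ (a + b + d + d)) := by
    simpa only [map_add] using
      (((h.mixedDiff a (by simp)).add_left (h.mixedDiff b (by simp))).add_left hd).add_left hd
  have outer : x + a + b + d = x - d + (a + b + d + d) := by abel
  have shift : x + a + b + d - (a + b + d) = x := by abel
  rw [outer, crossTerm_add_right habdd, ← outer, shift, map_add σ (x + a + b) d]
  ring

lemma crossTerm_side_le (h : IsSolitonTau a b d L σ g) (x : E) :
    crossTerm σ c (a + b + d) g (x + a) (x + b) ≤ g x + g (x - d) + (σ (x + a + b) + c) := by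
  have left := h.mixedDiff_b (x - b - d)
  have right := h.mixedDiff_a (x - a - d)
  have hxa : x + a - (a + b + d) = x - b - d := by abel
  have hxb : x + b - (a + b + d) = x - a - d := by abel
  have hb : x - b - d + b = x - d := by abel
  have hb' : x - b - d + (b + d) = x := by abel
  have hb'' : x - d + (b + d) = x + b := by abel
  have ha : x - a - d + a = x - d := by abel
  have ha' : x - a - d + (a + d) = x := by abel
  have ha'' : x - d + (a + d) = x + a := by abel
  rw [hb, hb', hb''] at left
  rw [ha, ha', ha''] at right
  simp only [crossTerm, hxa, hxb, map_add]
  refine max_le ?_ ?_ <;> linarith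

lemma le_crossTerm_side (hg : Function.Periodic g a) (hσ : σ a = 0) (x : E) :
    g x + g (x - d) + (σ (x + a + b) + c) ≤ crossTerm σ c (a + b + d) g (x + a) (x + b) := by
  have shift : x - d = x + b - (a + b + d) + a := by abel
  refine le_max_of_le_right (le_of_eq ?_)
  rw [hg, shift, hg]
  simp only [map_add, hσ]
  ring

lemma bilinearEq_crossTerm (h : IsSolitonTau a b d L σ g) (hL : σ d ≤ L)
    (hσ : σ d < L → σ a = 0) : BilinearEq a b d L (crossTerm σ c (a + b + d) g) := fun x => by
  rw [h.crossTerm_diagonal, h.crossTerm_outer]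
  rcases hL.lt_or_eq with hd | hd
  · rw [(h.crossTerm_side_le x).antisymm (le_crossTerm_side (h.periodic hd) (hσ hd) x)]
    exact (max_eq_left (by linarith)).symm
  · rw [hd, add_sub_cancel_right, max_eq_right (h.crossTerm_side_le x)]

lemma addSoliton (h : IsSolitonTau a b d L σ g) (c : ℝ) (hL : σ d ≤ L)
    (hσ : σ d < L → σ a = 0) : IsSolitonTau a b d L σ (addSoliton σ c (a + b + d) g) where
  mixedDiff v hv := mixedDiffLE_addSoliton (add_zero _) (h.mixedDiff v hv)
    (h.mixedDiff v hv) fun x => by simp [add_comm]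
  mixedDiff_a := mixedDiffLE_addSoliton (w' := b) (by abel) h.mixedDiff_a
    (h.mixedDiff a (by simp)) h.side_le_diagonal
  mixedDiff_b := mixedDiffLE_addSoliton (w' := a) (by abel) h.mixedDiff_b
    (h.mixedDiff b (by simp)) fun x => by
      simpa only [add_comm (g (x + a)), add_right_comm x a b] using h.side_le_diagonal x
  periodic hd := periodic_addSoliton (h.periodic hd) (hσ hd)
  bilinear := by
    simp only [addSoliton_add_addSoliton]
    exact (h.bilinear.sup (h.bilinear.add_phase σ (2 * c) _)).sup (h.bilinearEq_crossTerm hL hσ)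

end IsSolitonTau

end Bilinear

section TypeI

variable {N : ℕ}

/-- The expression maximized in `typeIMax`, at the occupation numbers `μ`. -/
noncomputable def occupationWeight (s r : Fin N → ℝ) (μ : Fin N → Bool) : ℝ :=
  (∑ j, (if μ j then (1 : ℝ) else 0) * s j) -
    ∑ j, ∑ j', if j < j' then
      (if μ j then (1 : ℝ) else 0) * (if μ j' then (1 : ℝ) else 0) * r j else 0

lemma typeIMax_le_iff {s r : Fin N → ℝ} {t : ℝ} :
    typeIMax N s r ≤ t ↔ ∀ μ, occupationWeight s r μ ≤ t := by
  simp [typeIMax, occupationWeight]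

lemma occupationWeight_snocEquiv (s r : Fin (N + 1) → ℝ) (μ : Fin N → Bool) (m : Bool) :
    occupationWeight s r (Fin.snocEquiv (fun _ => Bool) (m, μ)) =
      if m then s (Fin.last N) + occupationWeight (Fin.init (s - r)) (Fin.init r) μ
      else occupationWeight (Fin.init s) (Fin.init r) μ := by
  have not_last_lt (j : Fin N) : ¬ Fin.last N < j.castSucc := (Fin.le_last _).not_gt
  cases m
  · simp [occupationWeight, Fin.snocEquiv, Fin.sum_univ_castSucc, not_last_lt, Fin.init]
  · simp only [occupationWeight, Fin.snocEquiv, Equiv.coe_fn_mk, Fin.sum_univ_castSucc,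
      Fin.snoc_castSucc, Fin.snoc_last, Fin.castSucc_lt_castSucc_iff, Fin.castSucc_lt_last,
      not_last_lt, lt_self_iff_false, if_true, if_false, mul_one, one_mul, sum_const_zero,
      add_zero, sum_add_distrib, Fin.init, Pi.sub_apply, mul_sub, sum_sub_distrib]
    ring

lemma typeIMax_succ (s r : Fin (N + 1) → ℝ) :
    typeIMax (N + 1) s r = max (typeIMax N (Fin.init s) (Fin.init r))
      (s (Fin.last N) + typeIMax N (Fin.init (s - r)) (Fin.init r)) := by
  refine eq_of_forall_ge_iff fun t => ?_
  rw [typeIMax_le_iff, ← (Fin.snocEquiv fun _ => Bool).forall_congr_right]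
  simp only [Prod.forall, Bool.forall_bool, occupationWeight_snocEquiv,
    Bool.false_eq_true, if_true, if_false, max_le_iff, ← le_sub_iff_add_le', typeIMax_le_iff]

variable {E : Type*} [AddCommGroup E]

/-- The Type I function with linear phases `σ j`, phase constants `c j` and interactions `σ j K`. -/
noncomputable def typeITau (σ : Fin N → E →+ ℝ) (c : Fin N → ℝ) (K x : E) : ℝ :=
  typeIMax N (fun j => σ j x + c j) (fun j => σ j K)

lemma typeITau_succ (σ : Fin (N + 1) → E →+ ℝ) (c : Fin (N + 1) → ℝ) (K : E) :
    typeITau σ c K = addSoliton (σ (Fin.last N)) (c (Fin.last N)) K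
      (typeITau (Fin.init σ) (Fin.init c) K) := by
  funext x
  have shifted : Fin.init ((fun j => σ j x + c j) - fun j => σ j K) =
      fun j => Fin.init σ j (x - K) + Fin.init c j := by
    funext j
    simp only [Fin.init, Pi.sub_apply, map_sub]
    ring
  rw [typeITau, typeIMax_succ, shifted]
  rfl

lemma isSolitonTau_typeITau {a b d : E} {L : ℝ} (hL : 0 ≤ L) {σ : Fin N → E →+ ℝ}
    (c : Fin N → ℝ) (hσ_nonneg : ∀ v ∈ ({a, b, d} : Set E), ∀ j, 0 ≤ σ j v)
    (hσ_mono : ∀ v ∈ ({a, b, d} : Set E), Monotone fun j => σ j v)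
    (hσ_le : ∀ j, σ j d ≤ L) (hσ_zero : ∀ j, σ j d < L → σ j a = 0) {ρ : E →+ ℝ}
    (hρ : ∀ v ∈ ({a, b, d} : Set E), 0 ≤ ρ v)
    (hσρ : ∀ v ∈ ({a, b, d} : Set E), ∀ j, σ j v ≤ ρ v) :
    IsSolitonTau a b d L ρ (typeITau σ c (a + b + d)) := by
  induction N generalizing ρ with
  | zero =>
    have vacuum : typeITau σ c (a + b + d) = fun _ => 0 := by
      funext x
      simp [typeITau, typeIMax]
    exact vacuum ▸ IsSolitonTau.zero hL hρ
  | succ N ih =>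
    have h : IsSolitonTau a b d L (σ (Fin.last N))
        (typeITau (Fin.init σ) (Fin.init c) (a + b + d)) :=
      ih _ (fun v hv j => hσ_nonneg v hv _)
        (fun v hv => (hσ_mono v hv).comp Fin.strictMono_castSucc.monotone) (fun j => hσ_le _)
        (fun j => hσ_zero _) (fun v hv => hσ_nonneg v hv _)
        (fun v hv j => hσ_mono v hv (Fin.le_last _))
    rw [typeITau_succ]
    exact (h.addSoliton _ (hσ_le _) (hσ_zero _)).mono fun v hv => hσρ v hv _

theorem bilinearEq_typeITau {a b d : E} {L : ℝ} (hL : 0 ≤ L) {σ : Fin N → E →+ ℝ}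
    (c : Fin N → ℝ) (hσ_nonneg : ∀ v ∈ ({a, b, d} : Set E), ∀ j, 0 ≤ σ j v)
    (hσ_mono : ∀ v ∈ ({a, b, d} : Set E), Monotone fun j => σ j v)
    (hσ_le : ∀ j, σ j d ≤ L) (hσ_zero : ∀ j, σ j d < L → σ j a = 0) :
    BilinearEq a b d L fun y z =>
      typeITau σ c (a + b + d) y + typeITau σ c (a + b + d) z := by
  refine (isSolitonTau_typeITau hL c hσ_nonneg hσ_mono hσ_le hσ_zero (ρ := ∑ j, σ j)
    (fun v hv => ?_) fun v hv j => ?_).bilinear <;> rw [AddMonoidHom.finsetSum_apply]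
  · exact Finset.sum_nonneg fun j _ => hσ_nonneg v hv j
  · exact Finset.single_le_sum (f := fun j => σ j v) (fun j _ => hσ_nonneg v hv j) (mem_univ j)

end TypeI

section Phase

variable {L k l : ℝ}

/-- The linear phase `p * n - min p L * i` of a soliton of amplitude `p`, at `(n, i)`. -/
noncomputable def solitonPhase (L p : ℝ) : ℝ × ℝ →+ ℝ :=
  (AddMonoidHom.mulLeft p).coprod (AddMonoidHom.mulLeft (-min p L))

lemma solitonPhase_apply (L p : ℝ) (x : ℝ × ℝ) :
    solitonPhase L p x = p * x.1 - min p L * x.2 := by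
  simp [solitonPhase, sub_eq_add_neg]

lemma monotone_solitonPhase (L : ℝ) (hk : 1 ≤ k) (hkl : 1 ≤ k + l) :
    ∀ v ∈ ({(1, 1), (k - 1, -l), (0, -1)} : Set (ℝ × ℝ)),
      Monotone fun p => solitonPhase L p v := by
  have velocity : Monotone fun p => min p L := monotone_id.min monotone_const
  have excess : Monotone fun p => p - min p L := by
    simp only [← max_sub_sub_left, sub_self]
    exact monotone_const.max fun _ _ h => sub_le_sub_right h L
  rintro v (rfl | rfl | rfl)
  · simpa [solitonPhase_apply] using excess
  · have split (p : ℝ) : solitonPhase L p (k - 1, -l) =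
        (k - 1) * (p - min p L) + (k + l - 1) * min p L := by
      rw [solitonPhase_apply]; ring
    simp only [split]
    exact (excess.const_mul (by linarith)).add (velocity.const_mul (by linarith))
  · simpa [solitonPhase_apply] using velocity

lemma solitonPhase_nonneg {p : ℝ} (hL : 0 ≤ L) (hk : 1 ≤ k) (hkl : 1 ≤ k + l) (hp : 0 ≤ p) :
    ∀ v ∈ ({(1, 1), (k - 1, -l), (0, -1)} : Set (ℝ × ℝ)), 0 ≤ solitonPhase L p v := fun v hv => by
  simpa [solitonPhase_apply, hL] using monotone_solitonPhase L hk hkl v hv hp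

variable {N : ℕ} {p c : Fin N → ℝ}

lemma typeITau_solitonPhase (n i : ℝ) :
    typeITau (fun j => solitonPhase L (p j)) c (k, -l) (n, i) =
      typeIMax N (fun j => p j * n - min (p j) L * i + c j)
        fun j => k * p j + l * min (p j) L := by
  simp [typeITau, solitonPhase_apply, mul_comm k, mul_comm l]

theorem bilinearEq_typeITau_solitonPhase (hp : ∀ j, 0 ≤ p j) (hp_mono : Monotone p) (hL : 0 ≤ L)
    (hk : 1 ≤ k) (hkl : 1 ≤ k + l) :
    BilinearEq (1, 1) (k - 1, -l) (0, -1) L fun y z =>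
      typeITau (fun j => solitonPhase L (p j)) c (k, -l) y +
        typeITau (fun j => solitonPhase L (p j)) c (k, -l) z := by
  have sum_eq : ((1, 1) + (k - 1, -l) + (0, -1) : ℝ × ℝ) = (k, -l) := by simp
  rw [← sum_eq]
  refine bilinearEq_typeITau hL c (fun v hv j => solitonPhase_nonneg hL hk hkl (hp j) v hv)
    (fun v hv => (monotone_solitonPhase L hk hkl v hv).comp hp_mono)
    (fun j => by simp [solitonPhase_apply]) fun j hj => ?_
  have hpL : p j < L := by simpa [solitonPhase_apply] using hj
  simp [solitonPhase_apply, hpL.le]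

end Phase

theorem ukdv_type_bilinear_typeI_general (N : ℕ) (p c : Fin N → ℝ)
    (L k l : ℝ) (hp0 : ∀ j, 0 ≤ p j) (hpmono : Monotone p)
    (hL : 0 ≤ L) (hk : 1 ≤ k) (hkl : 1 ≤ k + l)
    (q r : Fin N → ℝ)
    (hq : ∀ j, q j = min (p j) L)
    (hr : ∀ j, r j = k * p j + l * q j)
    (f : ℝ → ℝ → ℝ)
    (hf : ∀ n i : ℝ, f n i = typeIMax N (fun j => p j * n - q j * i + c j) r) :
    ∀ n i : ℝ,
      f n i + f (n + k) (i - l + 1) =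
        max (f (n + k - 1) (i - l) + f (n + 1) (i + 1))
            (f (n + k) (i - l) + f n (i + 1) - L) := by
  obtain rfl : q = fun j => min (p j) L := funext hq
  obtain rfl : r = fun j => k * p j + l * min (p j) L := funext hr
  intro n i
  have h := bilinearEq_typeITau_solitonPhase (c := c) hp0 hpmono hL hk hkl (n, i)
  simp only [Prod.mk_add_mk, Prod.mk_sub_mk, typeITau_solitonPhase, ← hf] at h
  linear_combination (norm := ring_nf) h

theorem ukdv_type_bilinear_typeI (N : ℕ) (hN : 1 ≤ N) (p c : Fin N → ℝ)
    (L k l : ℝ) (hp0 : ∀ j, 0 ≤ p j) (hpmono : Monotone p)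
    (hL : 0 ≤ L) (hk : 2 ≤ k) (hl : 0 ≤ l)
    (q r : Fin N → ℝ)
    (hq : ∀ j, q j = min (p j) L)
    (hr : ∀ j, r j = k * p j + l * q j)
    (f : ℝ → ℝ → ℝ)
    (hf : ∀ n i : ℝ, f n i = typeIMax N (fun j => p j * n - q j * i + c j) r) :
    ∀ n i : ℝ,
      f n i + f (n + k) (i - l + 1) =
        max (f (n + k - 1) (i - l) + f (n + 1) (i + 1))
            (f (n + k) (i - l) + f n (i + 1) - L) := by
  exact ukdv_type_bilinear_typeI_general N p c L k l hp0 hpmono hL (by linarith) (by linarith) q r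
    hq hr f hf
end

section
/- Let N ≥ 1, let p_1,...,p_N be reals with 0 ≤ p_1 ≤ ... ≤ p_N, let L ≥ 0 and let k, l be real constants with k ≥ 2 and l ≥ 0. Define q_j = min(p_j, L), r_j = k·p_j + l·q_j, s_j(n,i) = p_j·n − q_j·i + c_j for arbitrary reals c_j, and the Type II function f̃^n_i equal to the ultradiscrete permanent of the N×N matrix whose (j,m) entry (m = 1,...,N) is |s_j(n,i) + (−N−1+2m)·r_j/2|. Then for all real n, i: f̃^n_i + f̃^{n+k}_{i−l+1} = max( f̃^{n+k−1}_{i−l} + f̃^{n+1}_{i+1}, f̃^{n+k}_{i−l} + f̃^n_{i+1} − 2L ). -/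
open Finset

/-- The ultradiscrete permanent of an `N × N` real matrix:
the maximum over all permutations `π` of `Σ_j a j (π j)`. -/
noncomputable def uperm (N : ℕ) (a : Fin N → Fin N → ℝ) : ℝ :=
  Finset.univ.sup' Finset.univ_nonempty fun π : Equiv.Perm (Fin N) => ∑ j, a j (π j)

/-!
Write the absolute values in `f` as maxima over signs `ε`. For fixed `ε` the rearrangement
inequality performs the maximisation over permutations, and if the amplitudes `r` are the partial
sums of `d ≥ 0`, then up to a constant `f` is the maximum over `ε` of
`∑ j, ε j * s j - 1 / 4 * ∑ m, d m * (∑ j ≥ m, ε j) ^ 2`.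

A product of two such functions (a sum, in ultradiscrete form) is a maximum over pairs of sign
vectors; let `S` be the set on which they differ. By the parallelogram identity the value of a pair
splits into a part depending on the signs off `S` and on the sum of the two phases, which is the
same for all three products in the equation, and a part that is a sum over `m` of concave
quadratics in the tail sums `∑ j ∈ S, j ≥ m, ε j`. The parity of a tail sum is prescribed by `S`,
and a single `±1` walk reaches the best value of every tail sum at once: `0, 1, 0, 1, …` for the
first two products and `0, 1, 2, 1, 2, …` for the third one. The equation therefore already holds
for each `S` separately, and which of the two arguments of the maximum is attained depends on
whether `p j ≤ L` at `j = max S`.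
-/

section CumulativeSums

variable {ι R : Type*} [Fintype ι] [LinearOrder ι] [CommSemiring R]

/-- Partial sums from the bottom of the index set; its inverse takes successive differences. -/
def cumSum : (ι → R) →ₗ[R] ι → R where
  toFun d j := ∑ m with m ≤ j, d m
  map_add' d e := funext fun j => by simp only [Pi.add_apply, sum_add_distrib]
  map_smul' a d := funext fun j => by
    simp only [Pi.smul_apply, smul_eq_mul, mul_sum, RingHom.id_apply]

/-- Partial sums from the top of the index set, the transpose of `cumSum`. -/
def tailSum : (ι → R) →ₗ[R] ι → R where
  toFun v m := ∑ j with m ≤ j, v j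
  map_add' v w := funext fun m => by simp only [Pi.add_apply, sum_add_distrib]
  map_smul' a v := funext fun m => by
    simp only [Pi.smul_apply, smul_eq_mul, mul_sum, RingHom.id_apply]

theorem cumSum_apply (d : ι → R) (j : ι) : cumSum d j = ∑ m with m ≤ j, d m := rfl

theorem tailSum_apply (v : ι → R) (m : ι) : tailSum v m = ∑ j with m ≤ j, v j := rfl

theorem sum_mul_cumSum (v d : ι → R) :
    ∑ j, v j * cumSum d j = ∑ m, d m * tailSum v m := by
  simp only [cumSum_apply, tailSum_apply, mul_sum]
  rw [sum_comm' (t' := univ) (s' := fun m => univ.filter (m ≤ ·)) (by simp)]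
  simp only [mul_comm]

theorem sum_mul_mul_cumSum_min (v d : ι → R) :
    ∑ i, ∑ j, v i * v j * cumSum d (min i j) = ∑ m, d m * tailSum v m ^ 2 := by
  have hmin (i j : ι) : v i * v j * cumSum d (min i j) =
      ∑ m, d m * ((if m ≤ i then v i else 0) * if m ≤ j then v j else 0) := by
    simp only [cumSum_apply, le_min_iff, sum_filter, mul_sum, ite_and]
    refine sum_congr rfl fun m _ => ?_
    split_ifs <;> ring
  simp only [hmin, tailSum_apply, sum_filter]
  rw [sum_comm_cycle]
  simp only [sq, sum_mul_sum]
  simp only [mul_sum]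

variable [PartialOrder R] [IsOrderedAddMonoid R]

theorem monotone_cumSum {d : ι → R} (hd : 0 ≤ d) : Monotone (cumSum d) := fun _ _ hij =>
  sum_le_sum_of_subset_of_nonneg (monotone_filter_right _ fun _ _ h => h.trans hij)
    fun m _ _ => hd m

theorem cumSum_nonneg {d : ι → R} (hd : 0 ≤ d) : 0 ≤ cumSum d := fun _ =>
  sum_nonneg fun m _ => hd m

end CumulativeSums

section Increments

variable {N : ℕ} {R : Type*} [CommRing R]

theorem exists_nonneg_cumSum_eq [PartialOrder R] [IsOrderedAddMonoid R] {p : Fin N → R}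
    (hp : Monotone p) (hp0 : 0 ≤ p) : ∃ d, 0 ≤ d ∧ cumSum d = p := by
  let P : Fin (N + 1) → R := Fin.cons 0 p
  have hP : Monotone P := Fin.monotone_iff_le_succ.2 fun m => by
    rcases N with _ | N
    · exact m.elim0
    · refine m.cases (hp0 0) fun m => ?_
      exact hp m.castSucc_le_succ
  refine ⟨fun m => P m.succ - P m.castSucc, fun m => sub_nonneg.2 (hP m.castSucc_le_succ), ?_⟩
  ext j
  rw [cumSum_apply, filter_ge_eq_Iic, Fin.sum_Iic_sub]
  simp [P]

theorem exists_nonneg_cumSum_eq_min [LinearOrder R] [IsOrderedAddMonoid R] {p : Fin N → R} {L : R}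
    (hp : Monotone p) (hp0 : 0 ≤ p) (hL : 0 ≤ L) :
    ∃ δ e, 0 ≤ δ ∧ 0 ≤ e ∧ (cumSum δ = fun j => min (p j) L) ∧ cumSum (δ + e) = p := by
  obtain ⟨δ, hδ, hmin⟩ : ∃ δ, 0 ≤ δ ∧ cumSum δ = fun j => min (p j) L :=
    exists_nonneg_cumSum_eq (fun _ _ hij => min_le_min_right L (hp hij)) fun j => le_min (hp0 j) hL
  obtain ⟨e, he, hmax⟩ : ∃ e, 0 ≤ e ∧ cumSum e = fun j => max (p j - L) 0 :=
    exists_nonneg_cumSum_eq (fun _ _ hij => max_le_max_right 0 (sub_le_sub_right (hp hij) L))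
      fun j => le_max_right _ _
  refine ⟨δ, e, hδ, he, hmin, ?_⟩
  ext j
  rw [map_add, hmin, hmax, Pi.add_apply, ← max_add_add_left, add_zero]
  rcases le_total (p j) L with h | h <;> simp [h]

end Increments

section Energy

variable {ι : Type*} [Fintype ι] [LinearOrder ι]

/-- The objective that `uperm` maximises over sign vectors `v`, up to a constant, when the
amplitudes are `cumSum d` and the phases are `s`. -/
noncomputable def energy (d s v : ι → ℝ) : ℝ :=
  ∑ j, v j * s j - 1 / 4 * ∑ m, d m * tailSum v m ^ 2

/-- The contribution to the energy of a layer with linear coefficient `δ` and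
increment `ρ` in which the tail sum equals `x`. -/
noncomputable def layer (δ ρ x : ℝ) : ℝ := δ * x - ρ * x ^ 2 / 2

theorem energy_sub_add_energy_add (d s t a b : ι → ℝ) :
    energy d s (a - b) + energy d t (a + b) =
      energy ((2 : ℝ) • d) (s + t) a + energy ((2 : ℝ) • d) (t - s) b := by
  simp only [energy, map_sub, map_add, Pi.add_apply, Pi.sub_apply, Pi.smul_apply, mul_sum,
    ← sum_sub_distrib, ← sum_add_distrib, smul_eq_mul]
  exact sum_congr rfl fun j _ => by ring

theorem energy_two_smul_cumSum (d D v : ι → ℝ) :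
    energy ((2 : ℝ) • d) (cumSum D) v = ∑ m, layer (D m) (d m) (tailSum v m) := by
  rw [energy, sum_mul_cumSum, mul_sum, ← sum_sub_distrib]
  refine sum_congr rfl fun m _ => ?_
  simp only [layer, Pi.smul_apply, smul_eq_mul]
  ring

-- Writing `x = y + 2 c`, the difference of the two sides is `2 c (δ - ρ y) - 2 ρ c ^ 2`.
theorem layer_le_layer {δ ρ x y : ℝ} (hy : |δ - ρ * y| ≤ ρ) (c : ℤ) (hxy : x = y + 2 * c) :
    layer δ ρ x ≤ layer δ ρ y := by
  have hc : |(c : ℝ)| ≤ (c : ℝ) ^ 2 := by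
    exact_mod_cast Int.abs_eq_natAbs c ▸ Int.natAbs_le_self_sq c
  have hprod : c * (δ - ρ * y) ≤ ρ * (c : ℝ) ^ 2 := calc
    c * (δ - ρ * y) ≤ |(c : ℝ)| * |δ - ρ * y| := (le_abs_self _).trans_eq (abs_mul _ _)
    _ ≤ (c : ℝ) ^ 2 * ρ := by gcongr
    _ = ρ * (c : ℝ) ^ 2 := mul_comm _ _
  rw [layer, layer, hxy]
  linarith

end Energy

section Signs

variable {ι R : Type*} [Ring R] [LinearOrder R]

theorem intUnit_mul_le_abs (u : ℤˣ) (x : R) : u * x ≤ |x| := by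
  rcases Int.units_eq_one_or u with rfl | rfl
  · simpa using le_abs_self x
  · simpa using neg_le_abs x

variable [IsOrderedRing R]

theorem exists_intUnit_mul_eq_abs (x : ι → R) : ∃ ε : ι → ℤˣ, ∀ j, ε j * x j = |x j| := by
  refine ⟨fun j => if 0 ≤ x j then 1 else -1, fun j => ?_⟩
  dsimp only
  split_ifs with hx
  · simp [abs_of_nonneg hx]
  · simp [abs_of_neg (not_le.1 hx)]

theorem abs_intUnit_mul_sub_intUnit_mul {x y : R} (hx : 0 ≤ x) (hy : 0 ≤ y) (u v : ℤˣ) :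
    |u * x - v * y| = max x y - u * v * min x y := by
  have hdiff : |x - y| = max x y - min x y := (max_sub_min_eq_abs' x y).symm
  have hsum : |x + y| = max x y + min x y := by
    rw [max_add_min, abs_of_nonneg (add_nonneg hx hy)]
  have hneg : |-x - y| = max x y + min x y := by rw [← neg_add', abs_neg, hsum]
  rcases Int.units_eq_one_or u with rfl | rfl <;> rcases Int.units_eq_one_or v with rfl | rfl
  · simpa using hdiff
  · simpa using hsum
  · simpa [-max_add_min] using hneg
  · simpa [neg_add_eq_sub, abs_sub_comm y x] using hdiff

variable [DecidableEq ι]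

/-- The signs `ε` on `S`, extended by zero. -/
def signVec (S : Finset ι) (ε : ι → ℤˣ) (j : ι) : ℝ := if j ∈ S then (ε j : ℝ) else 0

/-- The sign vector `ε` with its signs on `S` reversed. -/
def flipSigns (S : Finset ι) (ε : ι → ℤˣ) (j : ι) : ℤˣ := if j ∈ S then -ε j else ε j

theorem signVec_congr {S : Finset ι} {ε η : ι → ℤˣ} (h : ∀ j ∈ S, ε j = η j) :
    signVec S ε = signVec S η := by
  ext j
  unfold signVec
  split_ifs with hj
  · rw [h j hj]
  · rfl

theorem flipSigns_filter_ne [Fintype ι] (σ τ : ι → ℤˣ) :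
    flipSigns {j | σ j ≠ τ j} τ = σ := by
  ext j
  by_cases h : σ j = τ j
  · simp [flipSigns, h]
  · simp [flipSigns, Int.units_ne_iff_eq_neg.1 h]

end Signs

theorem sum_step_card_filter_lt {ι : Type*} [LinearOrder ι] (g : ℕ → ℤ) (T : Finset ι) :
    ∑ j ∈ T, (g (#{i ∈ T | j < i} + 1) - g #{i ∈ T | j < i}) = g #T - g 0 := by
  induction T using Finset.induction_on_min with
  | empty => simp
  | insert a T ha ih =>
    have haT : a ∉ T := fun h => (ha a h).false
    have htop : {i ∈ insert a T | a < i} = T := by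
      rw [filter_insert, if_neg (lt_irrefl a), filter_true_of_mem ha]
    have hrest : ∀ j ∈ T, {i ∈ insert a T | j < i} = {i ∈ T | j < i} := fun j hj => by
      rw [filter_insert, if_neg (ha j hj).not_gt]
    rw [sum_insert haT, htop, sum_congr rfl fun j hj => by rw [hrest j hj], ih,
      card_insert_of_notMem haT]
    ring

section MaxEnergy

variable {ι : Type*} [Fintype ι] [LinearOrder ι]

theorem energy_flipSigns_add_energy (d s t : ι → ℝ) (S : Finset ι) (ε : ι → ℤˣ) :
    energy d s (fun j => flipSigns S ε j) + energy d t (fun j => ε j) =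
      energy ((2 : ℝ) • d) (s + t) (signVec Sᶜ ε) + energy ((2 : ℝ) • d) (t - s) (signVec S ε) := by
  rw [← energy_sub_add_energy_add]
  congr 2 <;> ext j <;> by_cases hj : j ∈ S <;> simp [signVec, flipSigns, hj]

theorem tailSum_signVec (S : Finset ι) (ε : ι → ℤˣ) (m : ι) :
    tailSum (signVec S ε) m = ((∑ j ∈ S with m ≤ j, (ε j : ℤ) : ℤ) : ℝ) := by
  push_cast
  simp only [tailSum_apply, signVec, sum_ite_mem, filter_inter, univ_inter]

/-- Walks on `ℤ` from the origin with steps `±1`. Prescribing the tail sums of a sign vector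
as a function of the number of remaining signs amounts to choosing such a walk. -/
structure IsUnitWalk (g : ℕ → ℤ) : Prop where
  zero : g 0 = 0
  isUnit_step (n : ℕ) : IsUnit (g (n + 1) - g n)

theorem IsUnitWalk.exists_tailSum_signVec_eq {g : ℕ → ℤ} (hg : IsUnitWalk g) (S : Finset ι) :
    ∃ η, ∀ m, tailSum (signVec S η) m = g #{j ∈ S | m ≤ j} := by
  refine ⟨fun j => (hg.isUnit_step #{i ∈ S | j < i}).unit, fun m => ?_⟩
  have hcount : ∀ j ∈ S.filter (m ≤ ·), #{i ∈ S | j < i} = #{i ∈ S.filter (m ≤ ·) | j < i} := by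
    intro j hj
    rw [filter_filter]
    congr 1
    refine filter_congr fun i _ => ⟨fun h => ⟨(mem_filter.1 hj).2.trans h.le, h⟩, And.right⟩
  rw [tailSum_signVec, sum_congr rfl fun j hj => by rw [IsUnit.unit_spec, hcount j hj],
    sum_step_card_filter_lt, hg.zero, sub_zero]

/-- The value of `energy (2 • d) (cumSum D)` at signs on `S` whose tail sums follow the walk `g`. -/
noncomputable def walkValue (d D : ι → ℝ) (g : ℕ → ℤ) (S : Finset ι) : ℝ :=
  ∑ m, layer (D m) (d m) (g #{j ∈ S | m ≤ j})

theorem energy_signVec_le_walkValue {d D : ι → ℝ} {g : ℕ → ℤ} (hg : IsUnitWalk g)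
    (hopt : ∀ m, ∀ n ≠ 0, |D m - d m * g n| ≤ d m) (S : Finset ι) (ε : ι → ℤˣ) :
    energy ((2 : ℝ) • d) (cumSum D) (signVec S ε) ≤ walkValue d D g S := by
  obtain ⟨η, hη⟩ := hg.exists_tailSum_signVec_eq S
  rw [energy_two_smul_cumSum]
  refine sum_le_sum fun m _ => ?_
  by_cases hS : #{j ∈ S | m ≤ j} = 0
  · rw [tailSum_signVec, card_eq_zero.1 hS, sum_empty, card_empty, hg.zero]
  · obtain ⟨c, hc⟩ : Even (∑ j ∈ S with m ≤ j, ((ε j : ℤ) - η j)) := even_sum _ fun j _ => by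
      rcases Int.units_eq_one_or (ε j) with h | h <;>
        rcases Int.units_eq_one_or (η j) with h' | h' <;> rw [h, h'] <;> decide
    refine layer_le_layer (hopt m _ hS) c ?_
    rw [← hη, tailSum_signVec, tailSum_signVec]
    rw [sum_sub_distrib] at hc
    norm_cast
    linarith

/-- The largest energy of a sign vector. -/
noncomputable def maxEnergy (d s : ι → ℝ) : ℝ :=
  univ.sup' univ_nonempty fun ε : ι → ℤˣ => energy d s fun j => ε j

theorem energy_le_maxEnergy (d s : ι → ℝ) (ε : ι → ℤˣ) :
    energy d s (fun j => ε j) ≤ maxEnergy d s :=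
  le_sup' (fun ε : ι → ℤˣ => energy d s fun j => ε j) (mem_univ ε)

theorem exists_maxEnergy_eq (d s : ι → ℝ) :
    ∃ ε : ι → ℤˣ, maxEnergy d s = energy d s fun j => ε j := by
  obtain ⟨ε, -, hε⟩ := exists_mem_eq_sup' (univ_nonempty (α := ι → ℤˣ))
    fun ε => energy d s fun j => ε j
  exact ⟨ε, hε⟩

-- A pair of sign vectors is determined by the set `S` on which they differ and the second of them.
theorem maxEnergy_add_maxEnergy {d D s t : ι → ℝ} {g : ℕ → ℤ} (hst : t - s = cumSum D)
    (hg : IsUnitWalk g) (hopt : ∀ m, ∀ n ≠ 0, |D m - d m * g n| ≤ d m) :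
    maxEnergy d s + maxEnergy d t =
      univ.sup' univ_nonempty fun x : Finset ι × (ι → ℤˣ) =>
        energy ((2 : ℝ) • d) (s + t) (signVec x.1ᶜ x.2) + walkValue d D g x.1 := by
  apply le_antisymm
  · obtain ⟨σ, hσ⟩ := exists_maxEnergy_eq d s
    obtain ⟨τ, hτ⟩ := exists_maxEnergy_eq d t
    refine le_sup'_of_le _ (mem_univ (({j | σ j ≠ τ j} : Finset ι), τ)) ?_
    rw [hσ, hτ, ← flipSigns_filter_ne σ τ, energy_flipSigns_add_energy, flipSigns_filter_ne, hst]
    gcongr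
    exact energy_signVec_le_walkValue hg hopt _ _
  · refine sup'_le _ _ fun ⟨S, ε⟩ _ => ?_
    obtain ⟨η, hη⟩ := hg.exists_tailSum_signVec_eq S
    let ε' : ι → ℤˣ := fun j => if j ∈ S then η j else ε j
    have hon : signVec S ε' = signVec S η := signVec_congr fun j hj => if_pos hj
    have hoff : signVec Sᶜ ε' = signVec Sᶜ ε := signVec_congr fun j hj => if_neg (mem_compl.1 hj)
    calc energy ((2 : ℝ) • d) (s + t) (signVec Sᶜ ε) + walkValue d D g S
        = energy ((2 : ℝ) • d) (s + t) (signVec Sᶜ ε') +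
            energy ((2 : ℝ) • d) (t - s) (signVec S ε') := by
          rw [hon, hoff, hst, energy_two_smul_cumSum, walkValue]
          simp only [hη]
      _ = energy d s (fun j => flipSigns S ε' j) + energy d t (fun j => ε' j) :=
          (energy_flipSigns_add_energy d s t S ε').symm
      _ ≤ maxEnergy d s + maxEnergy d t :=
          add_le_add (energy_le_maxEnergy _ _ _) (energy_le_maxEnergy _ _ _)

end MaxEnergy

section CenteredRanks

variable {N : ℕ}

theorem sum_sign_sub (m : Fin N) :
    ∑ u : Fin N, (SignType.sign ((m : ℝ) - u) : ℝ) = 2 * (m : ℕ) - N + 1 := by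
  have hsign (u : Fin N) : (SignType.sign ((m : ℝ) - u) : ℝ) =
      (if u < m then 1 else 0) - if m < u then 1 else 0 := by
    rcases lt_trichotomy u m with h | rfl | h
    · simp [h, h.not_gt]
    · simp
    · simp [h, h.not_gt]
  have hm : 1 + (m : ℕ) ≤ N := by omega
  simp only [hsign, sum_sub_distrib, sum_boole, filter_gt_eq_Iio, filter_lt_eq_Ioi, Fin.card_Iio,
    Fin.card_Ioi]
  rw [Nat.sub_sub, Nat.cast_sub hm]
  push_cast
  ring

theorem sum_mul_centeredRank_eq (x : Fin N → ℝ) (π : Equiv.Perm (Fin N)) :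
    ∑ j, x j * ((2 * ((π j : ℕ) : ℝ) - N + 1) / 2) =
      1 / 4 * ∑ j, ∑ i, (x j - x i) * SignType.sign ((π j : ℝ) - π i) := by
  have hrank (j : Fin N) :
      2 * ((π j : ℕ) : ℝ) - N + 1 = ∑ i, (SignType.sign ((π j : ℝ) - π i) : ℝ) := by
    rw [← sum_sign_sub, Equiv.sum_comp π fun u => (SignType.sign ((π j : ℝ) - u) : ℝ)]
  have hswap : ∑ j, ∑ i, x i * (SignType.sign ((π j : ℝ) - π i) : ℝ) =
      -∑ j, ∑ i, x j * (SignType.sign ((π j : ℝ) - π i) : ℝ) := by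
    rw [sum_comm]
    simp only [← sum_neg_distrib]
    refine sum_congr rfl fun j _ => sum_congr rfl fun i _ => ?_
    rw [← neg_sub, Left.sign_neg, SignType.coe_neg, mul_neg]
  simp only [hrank, sub_mul, sum_sub_distrib, hswap, ← mul_div_assoc, ← sum_div, mul_sum]
  ring

theorem sum_mul_centeredRank_le (x : Fin N → ℝ) (π : Equiv.Perm (Fin N)) :
    ∑ j, x j * ((2 * ((π j : ℕ) : ℝ) - N + 1) / 2) ≤ 1 / 4 * ∑ j, ∑ i, |x j - x i| := by
  rw [sum_mul_centeredRank_eq]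
  gcongr with j _ i _
  cases SignType.sign ((π j : ℝ) - π i)
  · simp
  · simpa using neg_le_abs (x j - x i)
  · simpa using le_abs_self (x j - x i)

theorem exists_sum_mul_centeredRank_eq (x : Fin N → ℝ) : ∃ π : Equiv.Perm (Fin N),
    ∑ j, x j * ((2 * ((π j : ℕ) : ℝ) - N + 1) / 2) = 1 / 4 * ∑ j, ∑ i, |x j - x i| := by
  refine ⟨(Tuple.sort x)⁻¹, ?_⟩
  rw [sum_mul_centeredRank_eq]
  have hmono : ∀ a b, (Tuple.sort x)⁻¹ a < (Tuple.sort x)⁻¹ b → x a ≤ x b := fun a b h => by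
    simpa using Tuple.monotone_sort x h.le
  congr! 3 with j _ i _
  rcases lt_trichotomy ((Tuple.sort x)⁻¹ j) ((Tuple.sort x)⁻¹ i) with h | h | h
  · rw [abs_of_nonpos (sub_nonpos.2 (hmono _ _ h)), sign_neg (by simpa using h)]
    simp
  · rw [(Tuple.sort x)⁻¹.injective h]
    simp
  · rw [abs_of_nonneg (sub_nonneg.2 (hmono _ _ h)), sign_pos (by simpa using h)]
    simp

end CenteredRanks

section TypeII

variable {N : ℕ}

theorem le_uperm (a : Fin N → Fin N → ℝ) (π : Equiv.Perm (Fin N)) :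
    ∑ j, a j (π j) ≤ uperm N a :=
  le_sup' (fun π : Equiv.Perm (Fin N) => ∑ j, a j (π j)) (mem_univ π)

theorem uperm_comp_perm (a : Fin N → Fin N → ℝ) (σ : Equiv.Perm (Fin N)) :
    uperm N (fun j => a (σ j)) = uperm N a := by
  have hle (a : Fin N → Fin N → ℝ) (σ : Equiv.Perm (Fin N)) :
      uperm N (fun j => a (σ j)) ≤ uperm N a := sup'_le _ _ fun π _ => by
    rw [← Equiv.sum_comp σ⁻¹]
    simpa using le_uperm a (π * σ⁻¹)
  refine (hle a σ).antisymm ?_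
  simpa using hle (fun j => a (σ j)) σ⁻¹

/-- The Type II function with amplitudes `r` at the phases `s`. Columns are numbered from `0`,
so that column `m` carries the weight `(2 m - N + 1) / 2`. -/
noncomputable def typeII (r s : Fin N → ℝ) : ℝ :=
  uperm N fun j m => |s j + (2 * ((m : ℕ) : ℝ) - (N : ℝ) + 1) * r j / 2|

theorem typeII_comp_perm (r s : Fin N → ℝ) (σ : Equiv.Perm (Fin N)) :
    typeII (r ∘ σ) (s ∘ σ) = typeII r s :=
  uperm_comp_perm (fun j m => |s j + (2 * ((m : ℕ) : ℝ) - (N : ℝ) + 1) * r j / 2|) σ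

-- For given signs, the rearrangement inequality gives the optimal permutation.
theorem typeII_eq_sup' (r s : Fin N → ℝ) :
    typeII r s = univ.sup' univ_nonempty fun ε : Fin N → ℤˣ =>
      ∑ j, ε j * s j + 1 / 4 * ∑ j, ∑ i, |ε j * r j - ε i * r i| := by
  have hsplit (ε : Fin N → ℤˣ) (π : Equiv.Perm (Fin N)) :
      ∑ j, ε j * (s j + (2 * ((π j : ℕ) : ℝ) - (N : ℝ) + 1) * r j / 2) =
        ∑ j, ε j * s j + ∑ j, ε j * r j * ((2 * ((π j : ℕ) : ℝ) - N + 1) / 2) := by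
    rw [← sum_add_distrib]
    exact sum_congr rfl fun j _ => by ring
  apply le_antisymm
  · refine sup'_le univ_nonempty _ fun π _ => ?_
    obtain ⟨ε, hε⟩ := exists_intUnit_mul_eq_abs fun j =>
      s j + (2 * ((π j : ℕ) : ℝ) - (N : ℝ) + 1) * r j / 2
    refine le_sup'_of_le _ (mem_univ ε) ?_
    simp only [← hε, hsplit]
    gcongr
    exact sum_mul_centeredRank_le (fun j => ε j * r j) π
  · refine sup'_le _ _ fun ε _ => ?_
    obtain ⟨π, hπ⟩ := exists_sum_mul_centeredRank_eq fun j => ε j * r j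
    rw [← hπ, ← hsplit]
    exact (sum_le_sum fun j _ => intUnit_mul_le_abs _ _).trans
      (le_uperm (fun j m => |s j + (2 * ((m : ℕ) : ℝ) - (N : ℝ) + 1) * r j / 2|) π)

theorem typeII_cumSum {d : Fin N → ℝ} (hd : 0 ≤ d) (s : Fin N → ℝ) :
    typeII (cumSum d) s =
      1 / 4 * ∑ j, ∑ i, max (cumSum d j) (cumSum d i) + maxEnergy d s := by
  rw [typeII_eq_sup', maxEnergy, add_sup']
  refine sup'_congr _ rfl fun ε _ => ?_
  have hmin (j i : Fin N) : min (cumSum d j) (cumSum d i) = cumSum d (min j i) :=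
    ((monotone_cumSum hd).map_min).symm
  simp only [abs_intUnit_mul_sub_intUnit_mul (cumSum_nonneg hd _) (cumSum_nonneg hd _), hmin,
    sum_sub_distrib, sum_mul_mul_cumSum_min (fun j => (ε j : ℝ)) d, energy]
  ring

end TypeII

/-- The walk `0, 1, 0, 1, …`. -/
def zigzag (n : ℕ) : ℤ := n % 2

/-- The walk `0, 1, 2, 1, 2, …`. -/
def raisedZigzag (n : ℕ) : ℤ := if n = 0 then 0 else 2 - n % 2

theorem isUnitWalk_zigzag : IsUnitWalk zigzag where
  zero := rfl
  isUnit_step n := by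
    simp only [zigzag, Int.isUnit_iff]
    omega

theorem isUnitWalk_raisedZigzag : IsUnitWalk raisedZigzag where
  zero := rfl
  isUnit_step n := by
    simp only [raisedZigzag, Int.isUnit_iff]
    rcases Nat.eq_zero_or_pos n with rfl | hn
    · simp
    · rw [if_neg n.succ_ne_zero, if_neg hn.ne']
      omega

theorem zigzag_eq_zero_or_one (n : ℕ) : zigzag n = 0 ∨ zigzag n = 1 :=
  Int.emod_two_eq_zero_or_one n

theorem raisedZigzag_eq_one_or_two {n : ℕ} (hn : n ≠ 0) :
    raisedZigzag n = 1 ∨ raisedZigzag n = 2 := by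
  rw [raisedZigzag, if_neg hn]
  omega

theorem abs_sub_mul_zigzag_le {D ρ : ℝ} (h₀ : 0 ≤ D) (h₁ : D ≤ ρ) (n : ℕ) :
    |D - ρ * zigzag n| ≤ ρ := by
  rcases zigzag_eq_zero_or_one n with h | h <;> rw [h, abs_le] <;> constructor <;> push_cast <;>
    linarith

theorem abs_sub_mul_raisedZigzag_le {D ρ : ℝ} (h₁ : ρ ≤ D) (h₂ : D ≤ 2 * ρ) {n : ℕ} (hn : n ≠ 0) :
    |D - ρ * raisedZigzag n| ≤ ρ := by
  rcases raisedZigzag_eq_one_or_two hn with h | h <;> rw [h, abs_le] <;> constructor <;>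
    push_cast <;> linarith

theorem layer_raisedZigzag (δ ρ : ℝ) {n : ℕ} (hn : n ≠ 0) :
    layer (ρ + δ) ρ (raisedZigzag n) = layer (ρ - δ) ρ (zigzag n) + 2 * δ := by
  have hsum : raisedZigzag n = 2 - zigzag n := if_neg hn
  rcases zigzag_eq_zero_or_one n with h | h <;> rw [hsum, h] <;> norm_num [layer] <;> ring

theorem card_filter_le_eq_zero_iff {ι : Type*} [LinearOrder ι] {S : Finset ι}
    (hS : S.Nonempty) {m : ι} :
    #{j ∈ S | m ≤ j} = 0 ↔ ¬ m ≤ S.max' hS := by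
  simp only [card_eq_zero, filter_eq_empty_iff, not_le, max'_lt_iff]

theorem sup'_sup_sup' {α β : Type*} [SemilatticeSup α] {s : Finset β} (hs : s.Nonempty)
    (f g : β → α) : s.sup' hs f ⊔ s.sup' hs g = s.sup' hs fun b => f b ⊔ g b :=
  eq_of_forall_ge_iff fun _ => by simp only [sup_le_iff, sup'_le_iff, forall₂_and]

section Bilinear

variable {ι : Type*} [Fintype ι] [LinearOrder ι]

theorem walkValue_empty (d D : ι → ℝ) {g : ℕ → ℤ} (hg : IsUnitWalk g) :
    walkValue d D g ∅ = 0 := by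
  simp [walkValue, hg.zero, layer]

theorem walkValue_raisedZigzag (ρ δ : ι → ℝ) {S : Finset ι} (hS : S.Nonempty) :
    walkValue ρ (ρ + δ) raisedZigzag S =
      walkValue ρ (ρ - δ) zigzag S + 2 * cumSum δ (S.max' hS) := by
  rw [walkValue, walkValue, cumSum_apply, mul_sum, sum_filter, ← sum_add_distrib]
  refine sum_congr rfl fun m _ => ?_
  split_ifs with hm
  · exact layer_raisedZigzag _ _ ((card_filter_le_eq_zero_iff hS).not_left.2 hm)
  · simp [(card_filter_le_eq_zero_iff hS).2 hm, layer, zigzag, raisedZigzag]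

theorem walkValue_zigzag_sub (ρ D e : ι → ℝ) (S : Finset ι) :
    walkValue ρ (D - e) zigzag S =
      walkValue ρ D zigzag S - ∑ m, e m * zigzag #{j ∈ S | m ≤ j} := by
  rw [walkValue, walkValue, ← sum_sub_distrib]
  refine sum_congr rfl fun m _ => ?_
  simp only [layer, Pi.sub_apply]
  ring

theorem sum_mul_zigzag_nonneg {e : ι → ℝ} (he : 0 ≤ e) (S : Finset ι) :
    0 ≤ ∑ m, e m * (zigzag #{j ∈ S | m ≤ j} : ℝ) := sum_nonneg fun m _ =>
  mul_nonneg (he m) (by rcases zigzag_eq_zero_or_one #{j ∈ S | m ≤ j} with h | h <;> simp [h])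

theorem sum_mul_zigzag_eq_zero {e : ι → ℝ} (he : 0 ≤ e) {S : Finset ι} (hS : S.Nonempty)
    (hsum : cumSum e (S.max' hS) = 0) : ∑ m, e m * (zigzag #{j ∈ S | m ≤ j} : ℝ) = 0 := by
  rw [cumSum_apply, sum_eq_zero_iff_of_nonneg fun m _ => he m] at hsum
  refine sum_eq_zero fun m _ => ?_
  by_cases hm : m ≤ S.max' hS
  · rw [hsum m (by simpa using hm), zero_mul]
  · rw [(card_filter_le_eq_zero_iff hS).2 hm, isUnitWalk_zigzag.zero, Int.cast_zero, mul_zero]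

-- With `j = max S`, either `cumSum (δ + e) j ≤ L`, and then `e` vanishes on all layers up to `j`,
-- so that the first argument of the maximum is attained, or `cumSum δ j = L`, and the second is.
theorem walkValue_eq_max {δ e : ι → ℝ} {L : ℝ} (he : 0 ≤ e) (hL : 0 ≤ L)
    (hmin : ∀ j, cumSum δ j = min (cumSum (δ + e) j) L) (ρ : ι → ℝ) (S : Finset ι) :
    walkValue ρ (ρ - δ) zigzag S =
      max (walkValue ρ (ρ - δ - (2 : ℝ) • e) zigzag S)
        (walkValue ρ (ρ + δ) raisedZigzag S - 2 * L) := by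
  have he2 : 0 ≤ (2 : ℝ) • e := smul_nonneg zero_le_two he
  rcases S.eq_empty_or_nonempty with rfl | hS
  · simp [walkValue_empty, isUnitWalk_zigzag, isUnitWalk_raisedZigzag, hL]
  · rw [walkValue_zigzag_sub ρ (ρ - δ), walkValue_raisedZigzag ρ δ hS]
    have hj := hmin (S.max' hS)
    have hfirst := sum_mul_zigzag_nonneg he2 S
    have hsecond : cumSum δ (S.max' hS) ≤ L := hj.trans_le (min_le_right _ _)
    rcases le_total (cumSum (δ + e) (S.max' hS)) L with hp | hp
    · have hzero : cumSum ((2 : ℝ) • e) (S.max' hS) = 0 := by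
        rw [min_eq_left hp, map_add, Pi.add_apply, left_eq_add] at hj
        rw [map_smul, Pi.smul_apply, hj, smul_zero]
      rw [sum_mul_zigzag_eq_zero he2 hS hzero, sub_zero, max_eq_left (by linarith)]
    · rw [min_eq_right hp] at hj
      rw [hj, add_sub_cancel_right, max_eq_right (by linarith)]

theorem maxEnergy_bilinear {δ e ρ : ι → ℝ} {L : ℝ} (hδ : 0 ≤ δ) (he : 0 ≤ e)
    (hρ : δ + (2 : ℝ) • e ≤ ρ) (hL : 0 ≤ L)
    (hmin : ∀ j, cumSum δ j = min (cumSum (δ + e) j) L) (s : ι → ℝ) :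
    maxEnergy ρ s + maxEnergy ρ (s + cumSum ρ - cumSum δ) =
      max (maxEnergy ρ (s + cumSum (δ + e) - cumSum δ) +
          maxEnergy ρ (s + cumSum ρ - cumSum (δ + e)))
        (maxEnergy ρ (s - cumSum δ) + maxEnergy ρ (s + cumSum ρ) - 2 * L) := by
  have he2 : 0 ≤ (2 : ℝ) • e := smul_nonneg zero_le_two he
  have hδρ : δ ≤ ρ := (le_add_of_nonneg_right he2).trans hρ
  have h₁ := maxEnergy_add_maxEnergy (d := ρ) (D := ρ - δ) (s := s)
    (t := s + cumSum ρ - cumSum δ) (by rw [map_sub]; abel) isUnitWalk_zigzag fun m n _ =>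
      abs_sub_mul_zigzag_le (sub_nonneg.2 (hδρ m)) (sub_le_self _ (hδ m)) n
  have h₂ := maxEnergy_add_maxEnergy (d := ρ) (D := ρ - δ - (2 : ℝ) • e)
    (s := s + cumSum (δ + e) - cumSum δ) (t := s + cumSum ρ - cumSum (δ + e))
    (by simp only [map_add, map_sub, two_smul]; abel) isUnitWalk_zigzag fun m n _ =>
      abs_sub_mul_zigzag_le (sub_nonneg.2 (le_sub_iff_add_le'.2 (hρ m)))
        ((sub_le_self _ (he2 m)).trans (sub_le_self _ (hδ m))) n
  have h₃ := maxEnergy_add_maxEnergy (d := ρ) (D := ρ + δ) (s := s - cumSum δ)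
    (t := s + cumSum ρ) (by rw [map_add]; abel) isUnitWalk_raisedZigzag fun m n hn =>
      abs_sub_mul_raisedZigzag_le (le_add_of_nonneg_right (hδ m))
        ((add_le_add_right (hδρ m) _).trans_eq (two_mul _).symm) hn
  have hcenter₂ : s + cumSum (δ + e) - cumSum δ + (s + cumSum ρ - cumSum (δ + e)) =
      s + (s + cumSum ρ - cumSum δ) := by abel
  have hcenter₃ : s - cumSum δ + (s + cumSum ρ) = s + (s + cumSum ρ - cumSum δ) := by abel
  rw [h₁, h₂, h₃, hcenter₂, hcenter₃, sub_eq_add_neg _ (2 * L), sup'_add, sup'_sup_sup']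
  refine sup'_congr _ rfl fun x _ => ?_
  rw [walkValue_eq_max he hL hmin, ← max_add_add_left, add_assoc, ← sub_eq_add_neg]

end Bilinear

theorem typeII_cumSum_bilinear {N : ℕ} {δ e ρ : Fin N → ℝ} {L : ℝ} (hδ : 0 ≤ δ) (he : 0 ≤ e)
    (hρ : δ + (2 : ℝ) • e ≤ ρ) (hL : 0 ≤ L)
    (hmin : ∀ j, cumSum δ j = min (cumSum (δ + e) j) L) (s : Fin N → ℝ) :
    typeII (cumSum ρ) s + typeII (cumSum ρ) (s + cumSum ρ - cumSum δ) =
      max (typeII (cumSum ρ) (s + cumSum (δ + e) - cumSum δ) +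
          typeII (cumSum ρ) (s + cumSum ρ - cumSum (δ + e)))
        (typeII (cumSum ρ) (s - cumSum δ) + typeII (cumSum ρ) (s + cumSum ρ) - 2 * L) := by
  have hρ0 : 0 ≤ ρ := (add_nonneg hδ (smul_nonneg zero_le_two he)).trans hρ
  simp only [typeII_cumSum hρ0]
  rw [add_add_add_comm, maxEnergy_bilinear hδ he hρ hL hmin s, ← max_add_add_left]
  congr 1 <;> ring

theorem typeII_bilinear {N : ℕ} {p q r : Fin N → ℝ} {L k l : ℝ} (hp : 0 ≤ p)
    (hL : 0 ≤ L) (hk : 2 ≤ k) (hkl : 1 ≤ k + l) (hq : ∀ j, q j = min (p j) L)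
    (hr : r = k • p + l • q) (s : Fin N → ℝ) :
    typeII r s + typeII r (s + r - q) =
      max (typeII r (s + p - q) + typeII r (s + r - p))
        (typeII r (s - q) + typeII r (s + r) - 2 * L) := by
  let σ := Tuple.sort p
  obtain ⟨δ, e, hδ, he, hδq, hδep⟩ := exists_nonneg_cumSum_eq_min (p := p ∘ σ)
    (Tuple.monotone_sort p) (fun j => hp (σ j)) hL
  replace hδq : cumSum δ = q ∘ σ := hδq.trans (funext fun j => (hq (σ j)).symm)
  let ρ := k • (δ + e) + l • δ
  have hρr : cumSum ρ = r ∘ σ := by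
    rw [map_add, map_smul, map_smul, hδep, hδq, hr]
    rfl
  have hρ : δ + (2 : ℝ) • e ≤ ρ := calc
    δ + (2 : ℝ) • e ≤ (k + l) • δ + k • e := add_le_add
      (by simpa using smul_le_smul_of_nonneg_right hkl hδ) (smul_le_smul_of_nonneg_right hk he)
    _ = ρ := by simp only [ρ]; module
  have h := typeII_cumSum_bilinear hδ he hρ hL
    (fun j => by rw [hδq, hδep]; exact hq (σ j)) (s ∘ σ)
  rw [hδq, hδep, hρr] at h
  simpa only [← Pi.add_comp, ← Pi.sub_comp, typeII_comp_perm] using h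

theorem ukdv_type_bilinear_typeII_general (N : ℕ) (p c : Fin N → ℝ)
    (L k l : ℝ) (hp0 : ∀ j, 0 ≤ p j) (hL : 0 ≤ L) (hk : 2 ≤ k) (hkl : 1 ≤ k + l)
    (q r : Fin N → ℝ)
    (hq : ∀ j, q j = min (p j) L)
    (hr : ∀ j, r j = k * p j + l * q j)
    (f : ℝ → ℝ → ℝ)
    (hf : ∀ n i : ℝ, f n i = uperm N fun j m =>
      |(p j * n - q j * i + c j) + (2 * ((m : ℕ) : ℝ) - (N : ℝ) + 1) * r j / 2|) :
    ∀ n i : ℝ,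
      f n i + f (n + k) (i - l + 1) =
        max (f (n + k - 1) (i - l) + f (n + 1) (i + 1))
            (f (n + k) (i - l) + f n (i + 1) - 2 * L) := by
  intro n i
  let s : Fin N → ℝ := fun j => p j * n - q j * i + c j
  have hfs (n' i' : ℝ) (t : Fin N → ℝ) (ht : ∀ j, t j = p j * n' - q j * i' + c j) :
      f n' i' = typeII r t := by
    rw [hf, typeII]
    simp only [ht]
  rw [hfs n i s fun j => rfl, hfs (n + k) (i - l + 1) (s + r - q),
    hfs (n + k - 1) (i - l) (s + r - p), hfs (n + 1) (i + 1) (s + p - q),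
    hfs (n + k) (i - l) (s + r), hfs n (i + 1) (s - q),
    typeII_bilinear hp0 hL hk hkl hq (funext hr) s, add_comm (typeII r (s + p - q)),
    add_comm (typeII r (s - q))]
  all_goals
    intro j
    simp only [s, Pi.add_apply, Pi.sub_apply, hr]
    ring

theorem ukdv_type_bilinear_typeII (N : ℕ) (hN : 1 ≤ N) (p c : Fin N → ℝ)
    (L k l : ℝ) (hp0 : ∀ j, 0 ≤ p j) (hpmono : Monotone p)
    (hL : 0 ≤ L) (hk : 2 ≤ k) (hl : 0 ≤ l)
    (q r : Fin N → ℝ)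
    (hq : ∀ j, q j = min (p j) L)
    (hr : ∀ j, r j = k * p j + l * q j)
    (f : ℝ → ℝ → ℝ)
    (hf : ∀ n i : ℝ, f n i = uperm N fun j m =>
      |(p j * n - q j * i + c j) + (2 * ((m : ℕ) : ℝ) - (N : ℝ) + 1) * r j / 2|) :
    ∀ n i : ℝ,
      f n i + f (n + k) (i - l + 1) =
        max (f (n + k - 1) (i - l) + f (n + 1) (i + 1))
            (f (n + k) (i - l) + f n (i + 1) - 2 * L) := by
  exact ukdv_type_bilinear_typeII_general N p c L k l hp0 hL hk (by linarith) q r hq hr f hf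
end
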